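/- Darboux intertwining, second identity (equation (Id2)). For every 0 ≤ i ≤ m and every φ at which W(φ) ≠ 0 and W̃(φ) ≠ 0, one has (d/dφ)(Ψ̃_{m+1}·Ψ_i)(φ) / Ψ̃_{m+1}(φ) = (k_{m+1}² − k_i²)·Ψ̃_i(φ); that is, the operator A_m := Ψ̃_{m+1}^{−1} ∘ (d/dφ) ∘ Ψ̃_{m+1} sends Ψ_i to (k_{m+1}² − k_i²)·Ψ̃_i. -/

import Mathlib

/-- The Wronskian of a family of `n` real functions: the determinant of the
`n × n` matrix whose `(i, j)`-entry is the `j`-th derivative of the `i`-th function. -/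
noncomputable def wronsk {n : ℕ} (f : Fin n → ℝ → ℝ) (t : ℝ) : ℝ :=
  (Matrix.of fun i j : Fin n => iteratedDeriv (j : ℕ) (f i) t).det

/-- The functions `χ_i(φ) = cos(k_i φ + θ_i)`, `0 ≤ i ≤ m+1`. -/
noncomputable def chiF (m : ℕ) (k : Fin (m + 2) → ℤ) (θ : Fin (m + 2) → ℝ)
    (i : Fin (m + 2)) : ℝ → ℝ :=
  fun φ => Real.cos ((k i : ℝ) * φ + θ i)

/-- `W(φ) = Wr[χ_0, …, χ_m](φ)` (the first `m+1` functions). -/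
noncomputable def Wfn (m : ℕ) (k : Fin (m + 2) → ℤ) (θ : Fin (m + 2) → ℝ) : ℝ → ℝ :=
  wronsk fun j : Fin (m + 1) => chiF m k θ j.castSucc

/-- `W̃(φ) = Wr[χ_0, …, χ_{m+1}](φ)` (all `m+2` functions). -/
noncomputable def Wtfn (m : ℕ) (k : Fin (m + 2) → ℤ) (θ : Fin (m + 2) → ℝ) : ℝ → ℝ :=
  wronsk (chiF m k θ)

/-- `Ψ_i(φ) = Wr[χ_0, …, χ_{i−1}, χ_{i+1}, …, χ_m](φ)/W(φ)` for `0 ≤ i ≤ m`. -/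
noncomputable def PsiF (m : ℕ) (k : Fin (m + 2) → ℤ) (θ : Fin (m + 2) → ℝ)
    (i : Fin (m + 1)) : ℝ → ℝ :=
  fun φ => wronsk (fun j : Fin m => chiF m k θ (i.succAbove j).castSucc) φ / Wfn m k θ φ

/-- `Ψ̃_i(φ) = Wr[χ_0, …, χ_{i−1}, χ_{i+1}, …, χ_{m+1}](φ)/W̃(φ)` for `0 ≤ i ≤ m+1`. -/
noncomputable def PsitF (m : ℕ) (k : Fin (m + 2) → ℤ) (θ : Fin (m + 2) → ℝ)
    (i : Fin (m + 2)) : ℝ → ℝ :=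
  fun φ => wronsk (fun j : Fin (m + 1) => chiF m k θ (i.succAbove j)) φ / Wtfn m k θ φ

open Finset Matrix Topology

/-! Let `uᵢ = (-1)^(i+n) Ψᵢ` be the last row of the inverse of the Wronskian matrix of `f₀, …, fₙ`,
so that `∑ᵢ uᵢ fᵢ^(j) = δ_{jn}` for `j ≤ n`, while Jacobi's formula gives
`∑ᵢ uᵢ fᵢ^(n+1) = W'/W`. Differentiating the former, `∑ᵢ uᵢ' fᵢ^(j) = -∑ᵢ uᵢ fᵢ^(j+1)`. If
`fᵢ'' = (V - Eᵢ) fᵢ`, the potential drops out of `∑ᵢ uᵢ fᵢ^(j+2)` for `j < n`, leaving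
`-∑ᵢ Eᵢ uᵢ fᵢ^(j)`. These moments show that both sides of the intertwining identity
`uᵢ' + (W/W̃)'/(W/W̃) uᵢ = (Eᵢ - E_{m+1}) ũᵢ` have the same pairing with every column
`fᵢ^(j)`, `j ≤ m`, of the invertible Wronskian matrix of `f₀, …, f_m`. -/

section Wronskian

theorem hasDerivAt_det {𝕜 ι : Type*} [NontriviallyNormedField 𝕜] [Fintype ι] [DecidableEq ι]
    {M : 𝕜 → Matrix ι ι 𝕜} {M' : Matrix ι ι 𝕜} {t : 𝕜}
    (hM : ∀ i j, HasDerivAt (fun s => M s i j) (M' i j) t) :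
    HasDerivAt (fun s => (M s).det) (∑ j, ((M t).updateCol j (M'.col j)).det) t := by
  let detCols : ContinuousMultilinearMap 𝕜 (fun _ : ι => ι → 𝕜) 𝕜 :=
    { (detRowAlternating : (ι → 𝕜) [⋀^ι]→ₗ[𝕜] 𝕜).toMultilinearMap with
      cont := Continuous.matrix_det continuous_id }
  have hMT : HasDerivAt (fun s j i => M s i j) (fun j i => M' i j) t :=
    hasDerivAt_pi.mpr fun j => hasDerivAt_pi.mpr fun i => hM i j
  have hdet : HasDerivAt (fun s => (M s)ᵀ.det)
      (detCols.linearDeriv (fun j i => M t i j) fun j i => M' i j) t :=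
    (detCols.hasFDerivAt _).comp_hasDerivAt t hMT
  simp only [det_transpose, ContinuousMultilinearMap.linearDeriv_apply] at hdet
  refine hdet.congr_deriv (sum_congr rfl fun j _ => ?_)
  rw [← det_transpose, ← updateRow_transpose]
  rfl

theorem hasDerivAt_iteratedDeriv {n j : ℕ} {f : ℝ → ℝ} (hf : ContDiff ℝ n f) (hj : j < n)
    (t : ℝ) : HasDerivAt (iteratedDeriv j f) (iteratedDeriv (j + 1) f t) t := by
  rw [iteratedDeriv_succ]
  exact (hf.differentiable_iteratedDeriv j (mod_cast hj) t).hasDerivAt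

/-- The Wronskian matrix, with rows indexed by the functions and columns by the order of
differentiation. -/
noncomputable def wronskMatrix {n : ℕ} (f : Fin n → ℝ → ℝ) (t : ℝ) : Matrix (Fin n) (Fin n) ℝ :=
  of fun i j => iteratedDeriv (j : ℕ) (f i) t

theorem det_wronskMatrix {n : ℕ} (f : Fin n → ℝ → ℝ) (t : ℝ) :
    (wronskMatrix f t).det = wronsk f t :=
  rfl

theorem hasDerivAt_wronsk_sum {n : ℕ} {f : Fin n → ℝ → ℝ} (hf : ∀ i, ContDiff ℝ n (f i)) (t : ℝ) :
    HasDerivAt (wronsk f) (∑ j : Fin n, ((wronskMatrix f t).updateCol j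
      fun i => iteratedDeriv ((j : ℕ) + 1) (f i) t).det) t :=
  hasDerivAt_det (M' := of fun i j : Fin n => iteratedDeriv ((j : ℕ) + 1) (f i) t)
    fun i j => hasDerivAt_iteratedDeriv (hf i) j.isLt t

theorem differentiable_wronsk {n : ℕ} {f : Fin n → ℝ → ℝ} (hf : ∀ i, ContDiff ℝ n (f i)) :
    Differentiable ℝ (wronsk f) :=
  fun t => (hasDerivAt_wronsk_sum hf t).differentiableAt

theorem hasDerivAt_wronsk {n : ℕ} {f : Fin (n + 1) → ℝ → ℝ}
    (hf : ∀ i, ContDiff ℝ (n + 1 : ℕ) (f i)) (t : ℝ) :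
    HasDerivAt (wronsk f) ((wronskMatrix f t).updateCol (Fin.last n)
      fun i => iteratedDeriv (n + 1) (f i) t).det t := by
  have hrepeated : ∀ j : Fin n, ((wronskMatrix f t).updateCol j.castSucc
      fun i => iteratedDeriv ((j.castSucc : ℕ) + 1) (f i) t).det = 0 := fun j => by
    have hne : j.castSucc ≠ j.succ := Fin.castSucc_lt_succ.ne
    refine det_zero_of_column_eq hne fun i => ?_
    rw [updateCol_self, updateCol_ne hne.symm]
    rfl
  have hsum := hasDerivAt_wronsk_sum hf t
  rwa [Fin.sum_univ_castSucc, sum_eq_zero fun j _ => hrepeated j, zero_add] at hsum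

theorem contDiff_removeNth {n : ℕ} {f : Fin (n + 1) → ℝ → ℝ}
    (hf : ∀ i, ContDiff ℝ (n + 1 : ℕ) (f i)) (i : Fin (n + 1)) (j : Fin n) :
    ContDiff ℝ n (i.removeNth f j) :=
  (hf _).of_le (mod_cast n.le_succ)

theorem contDiff_init {n : ℕ} {f : Fin (n + 1) → ℝ → ℝ} (hf : ∀ i, ContDiff ℝ (n + 1 : ℕ) (f i))
    (j : Fin n) : ContDiff ℝ n (Fin.init f j) :=
  (hf _).of_le (mod_cast n.le_succ)

end Wronskian

section DualFunctions

variable {n : ℕ} {f : Fin (n + 1) → ℝ → ℝ} {t : ℝ}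

/-- The functions `Ψᵢ = Wr[f₀, …, fᵢ₋₁, fᵢ₊₁, …, fₙ] / Wr[f₀, …, fₙ]` attached to a family `f`.
At zeros of the Wronskian the value is `0`. -/
noncomputable def wronskRatio (f : Fin (n + 1) → ℝ → ℝ) (i : Fin (n + 1)) (t : ℝ) : ℝ :=
  wronsk (i.removeNth f) t / wronsk f t

theorem wronskRatio_last (f : Fin (n + 1) → ℝ → ℝ) (t : ℝ) :
    wronskRatio f (Fin.last n) t = wronsk (Fin.init f) t / wronsk f t := by
  rw [wronskRatio, Fin.removeNth_last]

/-- The last row of the inverse of the Wronskian matrix; these are the functions `Ψᵢ` up to sign,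
normalized to be dual to the columns of the matrix. -/
noncomputable def wronskDual (f : Fin (n + 1) → ℝ → ℝ) (i : Fin (n + 1)) (t : ℝ) : ℝ :=
  (wronskMatrix f t)⁻¹ (Fin.last n) i

theorem wronskDual_eq_wronskRatio (f : Fin (n + 1) → ℝ → ℝ) (i : Fin (n + 1)) (t : ℝ) :
    wronskDual f i t = (-1) ^ (i + n : ℕ) * wronskRatio f i t := by
  have hminor : (wronskMatrix f t).submatrix i.succAbove (Fin.last n).succAbove =
      wronskMatrix (i.removeNth f) t := by
    ext
    simp [wronskMatrix, Fin.removeNth]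
  rw [wronskDual, Matrix.inv_def, Ring.inverse_eq_inv', Matrix.smul_apply,
    adjugate_fin_succ_eq_det_submatrix, hminor, det_wronskMatrix, det_wronskMatrix,
    Fin.val_last, smul_eq_mul, wronskRatio]
  ring

theorem wronskRatio_eq_wronskDual (f : Fin (n + 1) → ℝ → ℝ) (i : Fin (n + 1)) (t : ℝ) :
    wronskRatio f i t = (-1) ^ (i + n : ℕ) * wronskDual f i t := by
  rw [wronskDual_eq_wronskRatio, ← mul_assoc, ← mul_pow, neg_one_mul, neg_neg, one_pow, one_mul]

theorem differentiableAt_wronskRatio (hf : ∀ i, ContDiff ℝ (n + 1 : ℕ) (f i))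
    (hW : wronsk f t ≠ 0) (i : Fin (n + 1)) : DifferentiableAt ℝ (wronskRatio f i) t := by
  have hminor : Differentiable ℝ (wronsk (i.removeNth f)) :=
    differentiable_wronsk (contDiff_removeNth hf i)
  exact (hminor t).div (differentiable_wronsk hf t) hW

theorem logDeriv_wronskRatio_last (hf : ∀ i, ContDiff ℝ (n + 1 : ℕ) (f i))
    (hW : wronsk (Fin.init f) t ≠ 0) (hWt : wronsk f t ≠ 0) :
    logDeriv (wronskRatio f (Fin.last n)) t =
      logDeriv (wronsk (Fin.init f)) t - logDeriv (wronsk f) t := by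
  have hinit : Differentiable ℝ (wronsk (Fin.init f)) :=
    differentiable_wronsk (contDiff_init hf)
  rw [funext (wronskRatio_last f),
    logDeriv_div t hW hWt (hinit t) (differentiable_wronsk hf t)]

theorem differentiableAt_wronskDual (hf : ∀ i, ContDiff ℝ (n + 1 : ℕ) (f i))
    (hW : wronsk f t ≠ 0) (i : Fin (n + 1)) : DifferentiableAt ℝ (wronskDual f i) t := by
  rw [funext (wronskDual_eq_wronskRatio f i)]
  exact (differentiableAt_wronskRatio hf hW i).const_mul _

theorem sum_wronskDual_mul_iteratedDeriv (hW : wronsk f t ≠ 0) {j : ℕ} (hj : j ≤ n) :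
    ∑ i, wronskDual f i t * iteratedDeriv j (f i) t = if j = n then 1 else 0 := by
  have hinv : (wronskMatrix f t)⁻¹ * wronskMatrix f t = 1 :=
    nonsing_inv_mul _ (isUnit_iff_ne_zero.mpr hW)
  have hentry := congrFun₂ hinv (Fin.last n) ⟨j, Nat.lt_succ_of_le hj⟩
  rw [mul_apply, one_apply] at hentry
  exact hentry.trans (if_congr (by rw [Fin.ext_iff, Fin.val_last, eq_comm]) rfl rfl)

theorem sum_wronskDual_mul_iteratedDeriv_succ (hf : ∀ i, ContDiff ℝ (n + 1 : ℕ) (f i)) (t : ℝ) :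
    ∑ i, wronskDual f i t * iteratedDeriv (n + 1) (f i) t = logDeriv (wronsk f) t := by
  let v : Fin (n + 1) → ℝ := fun i => iteratedDeriv (n + 1) (f i) t
  calc ((wronskMatrix f t)⁻¹ *ᵥ v) (Fin.last n)
      = (wronsk f t)⁻¹ * cramer (wronskMatrix f t) v (Fin.last n) := by
        rw [Matrix.inv_def, smul_mulVec, ← cramer_eq_adjugate_mulVec, Ring.inverse_eq_inv']
        rfl
    _ = logDeriv (wronsk f) t := by
        rw [cramer_apply, ← (hasDerivAt_wronsk hf t).deriv, logDeriv_apply, div_eq_inv_mul]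

theorem sum_deriv_wronskDual_mul_iteratedDeriv (hf : ∀ i, ContDiff ℝ (n + 1 : ℕ) (f i))
    (hW : wronsk f t ≠ 0) {j : ℕ} (hj : j ≤ n) :
    ∑ i, deriv (wronskDual f i) t * iteratedDeriv j (f i) t =
      -∑ i, wronskDual f i t * iteratedDeriv (j + 1) (f i) t := by
  have hconst : (fun s => ∑ i, wronskDual f i s * iteratedDeriv j (f i) s) =ᶠ[𝓝 t]
      fun _ => if j = n then 1 else 0 := by
    filter_upwards [(differentiable_wronsk hf t).continuousAt.eventually_ne hW] with s hs
    exact sum_wronskDual_mul_iteratedDeriv hs hj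
  have hderiv : HasDerivAt (fun s => ∑ i, wronskDual f i s * iteratedDeriv j (f i) s)
      (∑ i, (deriv (wronskDual f i) t * iteratedDeriv j (f i) t +
        wronskDual f i t * iteratedDeriv (j + 1) (f i) t)) t :=
    .fun_sum fun i _ => (differentiableAt_wronskDual hf hW i).hasDerivAt.mul
      (hasDerivAt_iteratedDeriv (hf i) (Nat.lt_succ_of_le hj) t)
  rw [eq_neg_iff_add_eq_zero, ← sum_add_distrib]
  exact hderiv.unique ((hasDerivAt_const t _).congr_of_eventuallyEq hconst)

theorem eq_of_sum_mul_iteratedDeriv_eq (hW : wronsk f t ≠ 0) {v w : Fin (n + 1) → ℝ}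
    (hvw : ∀ j ≤ n, ∑ i, v i * iteratedDeriv j (f i) t = ∑ i, w i * iteratedDeriv j (f i) t) :
    v = w := by
  have hunit : IsUnit (wronskMatrix f t) :=
    (isUnit_iff_isUnit_det _).mpr (isUnit_iff_ne_zero.mpr hW)
  have hvecMul : v ᵥ* wronskMatrix f t = w ᵥ* wronskMatrix f t :=
    funext fun j => hvw j (Nat.le_of_lt_succ j.isLt)
  exact vecMul_injective_of_isUnit hunit hvecMul

end DualFunctions

section DarbouxCrum

theorem iteratedDeriv_add_two_of_schrodinger {j : ℕ} {f V : ℝ → ℝ} {E : ℝ}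
    (hf : ContDiff ℝ j f) (hV : ContDiff ℝ j V)
    (hfV : iteratedDeriv 2 f = fun t => (V t - E) * f t) (t : ℝ) :
    iteratedDeriv (j + 2) f t = ∑ l ∈ range (j + 1),
      j.choose l * iteratedDeriv l f t * iteratedDeriv (j - l) V t - E * iteratedDeriv j f t := by
  have hsplit : iteratedDeriv 2 f = f * V - E • f := by
    ext s
    simp only [hfV, Pi.sub_apply, Pi.mul_apply, Pi.smul_apply, smul_eq_mul]
    ring
  have hmul : ContDiffAt ℝ j (f * V) t := (hf.mul hV).contDiffAt
  have hsmul : ContDiffAt ℝ j (E • f) t := (hf.const_smul E).contDiffAt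
  rw [iteratedDeriv_eq_iterate, Function.iterate_add_apply, ← iteratedDeriv_eq_iterate,
    ← iteratedDeriv_eq_iterate, hsplit, iteratedDeriv_sub hmul hsmul,
    iteratedDeriv_mul hf.contDiffAt hV.contDiffAt, iteratedDeriv_const_smul_field, smul_eq_mul]

theorem sum_wronskDual_mul_iteratedDeriv_add_two {n j : ℕ} {f : Fin (n + 1) → ℝ → ℝ} {V : ℝ → ℝ}
    {E : Fin (n + 1) → ℝ} {t : ℝ} (hf : ∀ i, ContDiff ℝ j (f i)) (hV : ContDiff ℝ j V)
    (hfV : ∀ i, iteratedDeriv 2 (f i) = fun s => (V s - E i) * f i s)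
    (hW : wronsk f t ≠ 0) (hj : j < n) :
    ∑ i, wronskDual f i t * iteratedDeriv (j + 2) (f i) t =
      -∑ i, E i * wronskDual f i t * iteratedDeriv j (f i) t := by
  have hpotential : ∑ i, wronskDual f i t * ∑ l ∈ range (j + 1),
      j.choose l * iteratedDeriv l (f i) t * iteratedDeriv (j - l) V t = 0 := by
    simp_rw [mul_sum]
    rw [sum_comm]
    refine sum_eq_zero fun l hl => ?_
    have hln : l < n := (mem_range_succ_iff.mp hl).trans_lt hj
    calc ∑ i, wronskDual f i t * (j.choose l * iteratedDeriv l (f i) t * iteratedDeriv (j - l) V t)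
        = (∑ i, wronskDual f i t * iteratedDeriv l (f i) t) *
            (j.choose l * iteratedDeriv (j - l) V t) := by
          rw [sum_mul]
          exact sum_congr rfl fun i _ => by ring
      _ = 0 := by rw [sum_wronskDual_mul_iteratedDeriv hW hln.le, if_neg hln.ne, zero_mul]
  simp_rw [fun i => iteratedDeriv_add_two_of_schrodinger (hf i) hV (hfV i) t, mul_sub]
  rw [sum_sub_distrib, hpotential, zero_sub]
  simp only [mul_left_comm, mul_assoc]

variable {m : ℕ} {f : Fin (m + 2) → ℝ → ℝ} {V : ℝ → ℝ} {E : Fin (m + 2) → ℝ} {t : ℝ}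

theorem sum_energy_sub_mul_wronskDual_mul_iteratedDeriv {j : ℕ} (hf : ∀ i, ContDiff ℝ j (f i))
    (hV : ContDiff ℝ j V) (hfV : ∀ i, iteratedDeriv 2 (f i) = fun s => (V s - E i) * f i s)
    (hW : wronsk f t ≠ 0) (hj : j ≤ m) :
    ∑ i : Fin (m + 1), (E i.castSucc - E (Fin.last (m + 1))) * wronskDual f i.castSucc t *
        iteratedDeriv j (Fin.init f i) t =
      -∑ i, wronskDual f i t * iteratedDeriv (j + 2) (f i) t := by
  have hjm : j < m + 1 := Nat.lt_succ_of_le hj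
  have hzero : ∑ i, E (Fin.last (m + 1)) * (wronskDual f i t * iteratedDeriv j (f i) t) = 0 := by
    rw [← mul_sum, sum_wronskDual_mul_iteratedDeriv hW hjm.le, if_neg hjm.ne, mul_zero]
  calc _ = ∑ i, (E i - E (Fin.last (m + 1))) * wronskDual f i t * iteratedDeriv j (f i) t := by
        rw [Fin.sum_univ_castSucc (n := m + 1), sub_self, zero_mul, zero_mul, add_zero]
        rfl
    _ = ∑ i, E i * wronskDual f i t * iteratedDeriv j (f i) t := by
        simp only [sub_mul, sum_sub_distrib, mul_assoc, hzero, sub_zero]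
    _ = _ := by rw [sum_wronskDual_mul_iteratedDeriv_add_two hf hV hfV hW hjm, neg_neg]

theorem sum_deriv_wronskDual_add_mul_iteratedDeriv {j : ℕ}
    (hf : ∀ i, ContDiff ℝ (m + 2 : ℕ) (f i)) (hW : wronsk (Fin.init f) t ≠ 0)
    (hWt : wronsk f t ≠ 0) (hj : j ≤ m) :
    ∑ i, (deriv (wronskDual (Fin.init f) i) t +
        (logDeriv (wronsk (Fin.init f)) t - logDeriv (wronsk f) t) *
          wronskDual (Fin.init f) i t) * iteratedDeriv j (Fin.init f i) t =
      -∑ i, wronskDual f i t * iteratedDeriv (j + 2) (f i) t := by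
  have hinit := contDiff_init hf
  simp only [add_mul, mul_assoc, sum_add_distrib, ← mul_sum,
    sum_deriv_wronskDual_mul_iteratedDeriv hinit hW hj, sum_wronskDual_mul_iteratedDeriv hW hj]
  obtain rfl | hlt := hj.eq_or_lt
  · rw [sum_wronskDual_mul_iteratedDeriv_succ hinit, sum_wronskDual_mul_iteratedDeriv_succ hf,
      if_pos rfl]
    ring
  · rw [sum_wronskDual_mul_iteratedDeriv hW hlt, sum_wronskDual_mul_iteratedDeriv hWt
      (Nat.succ_le_succ hlt), if_neg hlt.ne, mul_zero, add_zero]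
    simp only [Nat.succ_eq_add_one, Nat.add_right_cancel_iff]

theorem deriv_wronskDual_add_logDeriv_mul (hf : ∀ i, ContDiff ℝ (m + 2 : ℕ) (f i))
    (hV : ContDiff ℝ m V) (hfV : ∀ i, iteratedDeriv 2 (f i) = fun s => (V s - E i) * f i s)
    (hW : wronsk (Fin.init f) t ≠ 0) (hWt : wronsk f t ≠ 0) (i : Fin (m + 1)) :
    deriv (wronskDual (Fin.init f) i) t +
        (logDeriv (wronsk (Fin.init f)) t - logDeriv (wronsk f) t) * wronskDual (Fin.init f) i t =
      (E i.castSucc - E (Fin.last (m + 1))) * wronskDual f i.castSucc t := by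
  revert i
  refine funext_iff.mp (eq_of_sum_mul_iteratedDeriv_eq hW fun j hj => ?_)
  have hjm : j ≤ m + 2 := hj.trans (Nat.le_add_right m 2)
  exact (sum_deriv_wronskDual_add_mul_iteratedDeriv hf hW hWt hj).trans
    (sum_energy_sub_mul_wronskDual_mul_iteratedDeriv (fun i => (hf i).of_le (mod_cast hjm))
      (hV.of_le (mod_cast hj)) hfV hWt hj).symm

/-- The Darboux–Crum step for the Schrödinger operator `-d²/dt² + V`; the trigonometric case is
`V = 0`, `Eᵢ = kᵢ²`. -/
theorem darboux_intertwining_second_general (hf : ∀ i, ContDiff ℝ (m + 2 : ℕ) (f i))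
    (hV : ContDiff ℝ m V) (hfV : ∀ i, iteratedDeriv 2 (f i) = fun s => (V s - E i) * f i s)
    (i : Fin (m + 1)) (hW : wronsk (Fin.init f) t ≠ 0) (hWt : wronsk f t ≠ 0) :
    deriv (fun s => wronskRatio f (Fin.last (m + 1)) s * wronskRatio (Fin.init f) i s) t /
        wronskRatio f (Fin.last (m + 1)) t =
      (E (Fin.last (m + 1)) - E i.castSucc) * wronskRatio f i.castSucc t := by
  set w := wronskRatio f (Fin.last (m + 1)) with hw_def
  have hw : w t ≠ 0 := by
    rw [hw_def, wronskRatio_last]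
    exact div_ne_zero hW hWt
  have hu := differentiableAt_wronskDual (contDiff_init hf) hW i
  have hsign : (-1 : ℝ) ^ ((i.castSucc : ℕ) + (m + 1)) = -(-1) ^ ((i : ℕ) + m) := by
    rw [Fin.val_castSucc, ← add_assoc, pow_succ, mul_neg_one]
  calc _ = (-1) ^ (i + m : ℕ) * (deriv (wronskDual (Fin.init f) i) t +
        logDeriv w t * wronskDual (Fin.init f) i t) := by
        rw [funext (wronskRatio_eq_wronskDual (Fin.init f) i),
          deriv_fun_mul (differentiableAt_wronskRatio hf hWt _) (hu.const_mul _),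
          deriv_const_mul_field, logDeriv_apply]
        field
    _ = (-1) ^ (i + m : ℕ) *
          ((E i.castSucc - E (Fin.last (m + 1))) * wronskDual f i.castSucc t) := by
        rw [logDeriv_wronskRatio_last hf hW hWt,
          deriv_wronskDual_add_logDeriv_mul hf hV hfV hW hWt]
    _ = _ := by
        rw [wronskRatio_eq_wronskDual f, hsign]
        ring

end DarbouxCrum

theorem contDiff_chiF {r : WithTop ℕ∞} (m : ℕ) (k : Fin (m + 2) → ℤ) (θ : Fin (m + 2) → ℝ)
    (i : Fin (m + 2)) : ContDiff ℝ r (chiF m k θ i) := by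
  unfold chiF
  fun_prop

theorem iteratedDeriv_two_chiF (m : ℕ) (k : Fin (m + 2) → ℤ) (θ : Fin (m + 2) → ℝ)
    (i : Fin (m + 2)) :
    iteratedDeriv 2 (chiF m k θ i) = fun s => (0 - (k i : ℝ) ^ 2) * chiF m k θ i s := by
  have hphase : ∀ s : ℝ, HasDerivAt (fun s => (k i : ℝ) * s + θ i) (k i) s := fun s => by
    simpa using ((hasDerivAt_id s).const_mul (k i : ℝ)).add_const (θ i)
  have hderiv : deriv (chiF m k θ i) = fun s => -Real.sin ((k i : ℝ) * s + θ i) * k i :=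
    funext fun s => (hphase s).cos.deriv
  ext s
  rw [iteratedDeriv_succ, iteratedDeriv_one, hderiv,
    ((hphase s).sin.fun_neg.mul_const (k i : ℝ)).deriv, chiF]
  ring

/-- **Equation (Id2): Darboux intertwining, second identity.** The operator
`A_m = Ψ̃_{m+1}^{−1} ∘ (d/dφ) ∘ Ψ̃_{m+1}` sends `Ψ_i` to `(k_{m+1}² − k_i²) Ψ̃_i`
for `0 ≤ i ≤ m`. -/
theorem darboux_intertwining_second (m : ℕ) (hm : 1 ≤ m)
    (k : Fin (m + 2) → ℤ) (hk0 : k 0 = 0) (hk : StrictMono k)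
    (θ : Fin (m + 2) → ℝ) (hθ0 : θ 0 = 0)
    (i : Fin (m + 1)) (φ : ℝ)
    (hW : Wfn m k θ φ ≠ 0) (hWt : Wtfn m k θ φ ≠ 0) :
    deriv (fun t => PsitF m k θ (Fin.last (m + 1)) t * PsiF m k θ i t) φ /
        PsitF m k θ (Fin.last (m + 1)) φ
      = ((k (Fin.last (m + 1)) : ℝ) ^ 2 - (k i.castSucc : ℝ) ^ 2) *
          PsitF m k θ i.castSucc φ := by
  exact darboux_intertwining_second_general (contDiff_chiF m k θ) contDiff_const
    (iteratedDeriv_two_chiF m k θ) i hW hWt
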